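/- Let X = {x_0,...,x_m} and X' = {x'_0,...,x'_q}, let c ∈ ℝ^q⟨⟨X⟩⟩ and let d ∈ ℝ^m⟨⟨X'⟩⟩ be purely improper. Then the series e₀ := c ⟲ (d^{⧢-1} ∘ c)^{⋆-1} ∈ ℝ^q⟨⟨X⟩⟩ is the unique solution of the fixed point equation e = c ⟲ (d ∘ e) in ℝ^q⟨⟨X⟩⟩. -/

import Mathlib

open scoped BigOperators

namespace CFS

noncomputable section

/-- The alphabet `X = {x_0, x_1, ..., x_m}`: `none` encodes `x_0`, `some i` encodes `x_{i+1}`. -/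
abbrev Letter (m : ℕ) := Option (Fin m)

/-- Words over the alphabet `X`. -/
abbrev Word (m : ℕ) := List (Letter m)

/-- Formal power series `ℝ⟨⟨X⟩⟩`: coefficient functions on words. -/
abbrev FPS (m : ℕ) := Word m → ℝ

/-- Tuples of series `ℝ^ℓ⟨⟨X⟩⟩`. -/
abbrev FPST (m ℓ : ℕ) := Fin ℓ → FPS m

/-- The series `𝟙` (coefficient 1 at the empty word). -/
def unit (m : ℕ) : FPS m := fun w => if w = [] then 1 else 0

/-- The tuple `1l = (𝟙,...,𝟙)`. -/
def unitT (m ℓ : ℕ) : FPST m ℓ := fun _ => unit m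

/-- Left concatenation of a series by the letter `x`. -/
def lc {m : ℕ} (x : Letter m) (c : FPS m) : FPS m :=
  fun w => match w with
  | [] => 0
  | y :: u => if y = x then c u else 0

/-- The shuffle product `c ⧢ d`, given by the coefficientwise recursion dual to the
word recursion `(x u) ⧢ (y v) = x(u ⧢ (y v)) + y((x u) ⧢ v)`, `𝟙 ⧢ η = η ⧢ 𝟙 = η`:
left shifts act as derivations. -/
def sh {m : ℕ} : FPS m → FPS m → FPS m
  | c, d, [] => c [] * d []
  | c, d, x :: w => sh (fun u => c (x :: u)) d w + sh c (fun u => d (x :: u)) w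

/-- Componentwise shuffle on tuples. -/
def shT {m ℓ : ℕ} (c d : FPST m ℓ) : FPST m ℓ := fun i => sh (c i) (d i)

/-- A tuple is purely improper when each component has a nonzero constant coefficient. -/
def PurelyImproper {m ℓ : ℕ} (c : FPST m ℓ) : Prop := ∀ i, c i [] ≠ 0

/-- `η ⟲ d` on a word `η`. -/
def wmc {m : ℕ} (d : FPST m m) : Word m → FPS m
  | [] => unit m
  | none :: η => lc none (wmc d η)
  | some i :: η => lc (some i) (sh (d i) (wmc d η))

/-- Multiplicative mixed composition product `c ⟲ d := Σ_η c(η)(η ⟲ d)`.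
Since `η ⟲ d` is supported on words of length `≥ |η|`, only words `η` of length
`≤ |w|` contribute to the coefficient at `w`. -/
def mc {m : ℕ} (c : FPS m) (d : FPST m m) : FPS m :=
  fun w => ∑ k ∈ Finset.range (w.length + 1),
    ∑ η : Fin k → Letter m, c (List.ofFn η) * wmc d (List.ofFn η) w

/-- `⟲` on tuples (componentwise in the left argument). -/
def mcT {m ℓ : ℕ} (c : FPST m ℓ) (d : FPST m m) : FPST m ℓ := fun i => mc (c i) d

/-- `ψ_d(η)(𝟙)`, where `ψ_d(x'_0)(e) = x_0(𝟙 ⧢ e)` and `ψ_d(x'_i)(e) = x_0(d_i ⧢ e)`. -/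
def wcomp {m ℓ : ℕ} (d : FPST m ℓ) : Word ℓ → FPS m
  | [] => unit m
  | none :: η => lc none (sh (unit m) (wcomp d η))
  | some i :: η => lc none (sh (d i) (wcomp d η))

/-- Composition product `c ∘ d := Σ_η c(η) ψ_d(η)(𝟙)`; since `ψ_d(η)(𝟙)` is supported
on words of length `≥ |η|`, only `η` with `|η| ≤ |w|` contribute at `w`. -/
def comp {m ℓ : ℕ} (c : FPS ℓ) (d : FPST m ℓ) : FPS m :=
  fun w => ∑ k ∈ Finset.range (w.length + 1),
    ∑ η : Fin k → Letter ℓ, c (List.ofFn η) * wcomp d (List.ofFn η) w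

/-- `∘` componentwise in the left argument. -/
def compT {m ℓ q : ℕ} (c : FPST ℓ q) (d : FPST m ℓ) : FPST m q := fun i => comp (c i) d

/-- Multiplicative composition product `c ⋆ d := d ⧢ (c ⟲ d)`. -/
def star {m : ℕ} (c d : FPST m m) : FPST m m := fun i => sh (d i) (mc (c i) d)

/-- Iteration of `e ↦ c(𝟙)⁻¹ ⬝ (𝟙 − c' ⧢ e)` (with `c'` the proper part of `c`),
whose fixed point is the shuffle inverse of `c` when `c(𝟙) ≠ 0`. -/
def shInvAux {m : ℕ} (c : FPS m) : ℕ → FPS m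
  | 0 => fun _ => 0
  | n + 1 => fun w =>
      (c [])⁻¹ * (unit m w - sh (fun u => if u = [] then 0 else c u) (shInvAux c n) w)

/-- Shuffle inverse `c^{⧢-1}` (the coefficient at `w` stabilizes after `|w|+1` iterations). -/
def shInv {m : ℕ} (c : FPS m) : FPS m := fun w => shInvAux c (w.length + 1) w

/-- Componentwise shuffle inverse of a tuple. -/
def shInvT {m ℓ : ℕ} (c : FPST m ℓ) : FPST m ℓ := fun i => shInv (c i)

/-- Iteration of the strong contraction `e ↦ d^{⧢-1} ⟲ e`, whose fixed point is `d^{⋆-1}`. -/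
def starInvAux {m : ℕ} (d : FPST m m) : ℕ → FPST m m
  | 0 => fun _ _ => 0
  | n + 1 => mcT (shInvT d) (starInvAux d n)

/-- `⋆`-inverse `d^{⋆-1}` of a purely improper tuple. -/
def starInv {m : ℕ} (d : FPST m m) : FPST m m := fun i w => starInvAux d (w.length + 1) i w

/-- Multiplicative dynamic feedback product `c @̌ d := c ⟲ (d^{⧢-1} ∘ c)^{⋆-1}`. -/
def fb {m q : ℕ} (c : FPST m q) (d : FPST q m) : FPST m q :=
  mcT c (starInv (compT (shInvT d) c))

/-- Valuation: minimal length of a word in the support (`⊤` for the zero series). -/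
def val {m : ℕ} (c : FPS m) : ℕ∞ :=
  sInf ((fun w : Word m => (w.length : ℕ∞)) '' {w | c w ≠ 0})

/-- Valuation of a tuple: minimum over components. -/
def valT {m ℓ : ℕ} (c : FPST m ℓ) : ℕ∞ := ⨅ i, val (c i)

/-- `σ^v` for `v : ℕ∞`, with `σ^∞ = 0`; so `κ(a,b) = enpow σ (val (a-b))`. -/
def enpow (σ : ℝ) (v : ℕ∞) : ℝ := if v = ⊤ then 0 else σ ^ v.toNat

/-- The natural part `c_N`: restriction of `c` to words in the letter `x_0` only. -/
def natPart {m : ℕ} (c : FPS m) : FPS m :=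
  fun w => if ∀ x ∈ w, x = (none : Letter m) then c w else 0

/-- The forced part `c_F := c − c_N`. -/
def forcedPart {m : ℕ} (c : FPS m) : FPS m := fun w => c w - natPart c w

/-- `c` has (finite) class `r ≥ 1`: `supp(c_F) ⊆ x_0^{r-1}X^+` and `supp(c_F) ⊄ x_0^r X^+`. -/
def hasClassF {m : ℕ} (c : FPS m) (r : ℕ) : Prop :=
  1 ≤ r ∧
  (∀ w, forcedPart c w ≠ 0 → ∃ v, v ≠ [] ∧ w = List.replicate (r - 1) (none : Letter m) ++ v) ∧
  ¬ (∀ w, forcedPart c w ≠ 0 → ∃ v, v ≠ [] ∧ w = List.replicate r (none : Letter m) ++ v)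

/-- `𝒞(c) = r` for `r : ℕ∞`, with `𝒞(c) = ∞` iff `c_F = 0`. -/
def hasClass {m : ℕ} (c : FPS m) (r : ℕ∞) : Prop :=
  (r = ⊤ ∧ forcedPart c = fun _ => 0) ∨ ∃ n : ℕ, r = (n : ℕ∞) ∧ hasClassF c n

/-- `c` has relative degree `r`: `𝒞(c) = r` and `x_0^{r-1} x_1 ∈ supp(c_F)`. -/
def hasRelDeg (c : FPS 1) (r : ℕ) : Prop :=
  hasClassF c r ∧
  forcedPart c (List.replicate (r - 1) (none : Letter 1) ++ [some 0]) ≠ 0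

/-- `⟲` for single (SISO, `m = 1`) series. -/
def mc1 (c d : FPS 1) : FPS 1 := mc c (fun _ => d)

/-- The multiplicative dynamic feedback product for single (SISO) series. -/
def fb1 (c d : FPS 1) : FPS 1 :=
  mc c (starInv (compT (fun _ : Fin 1 => shInv d) (fun _ : Fin 1 => c)))

end

end CFS

namespace CFS

/-- left shift -/
def Dl {m : ℕ} (x : Letter m) (c : FPS m) : FPS m := fun u => c (x :: u)

/-- agreement on words of length `< n` -/
def Ag {m : ℕ} (n : ℕ) (a b : FPS m) : Prop := ∀ w, w.length < n → a w = b w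

theorem Ag.rfl' {m n : ℕ} {a : FPS m} : Ag n a a := fun _ _ => rfl

theorem Ag.of_eq {m n : ℕ} {a b : FPS m} (h : a = b) : Ag n a b := h ▸ Ag.rfl'

theorem Ag.symm' {m n : ℕ} {a b : FPS m} (h : Ag n a b) : Ag n b a :=
  fun w hw => (h w hw).symm

theorem Ag.trans' {m n : ℕ} {a b c : FPS m} (h : Ag n a b) (h' : Ag n b c) : Ag n a c :=
  fun w hw => (h w hw).trans (h' w hw)

theorem Ag.mono' {m n k : ℕ} {a b : FPS m} (h : Ag n a b) (hk : k ≤ n) : Ag k a b :=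
  fun w hw => h w (by omega)

theorem Ag.zero' {m : ℕ} {a b : FPS m} : Ag 0 a b := fun w hw => by omega

theorem Ag.succ' {m n : ℕ} {a b : FPS m} (h : a [] = b [])
    (h' : ∀ x, Ag n (Dl x a) (Dl x b)) : Ag (n + 1) a b := by
  intro w hw
  cases w with
  | nil => exact h
  | cons x w => exact h' x w (by simpa using hw)

theorem Ag.Dl' {m n : ℕ} {a b : FPS m} (h : Ag (n + 1) a b) (x : Letter m) :
    Ag n (Dl x a) (Dl x b) := fun w hw => h (x :: w) (by simpa using hw)

theorem Ag.eq' {m : ℕ} {a b : FPS m} (h : ∀ n, Ag n a b) : a = b := by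
  funext w
  exact h (w.length + 1) w (by omega)

theorem Ag.add' {m n : ℕ} {a b c d : FPS m} (h : Ag n a b) (h' : Ag n c d) :
    Ag n (a + c) (b + d) := fun w hw => by simp [h w hw, h' w hw]

theorem Ag.sum' {m n : ℕ} {ι : Type*} [Fintype ι] {f g : ι → FPS m} (h : ∀ i, Ag n (f i) (g i)) :
    Ag n (∑ i, f i) (∑ i, g i) := fun w hw => by
  simp only [Finset.sum_apply]
  exact Finset.sum_congr rfl fun i _ => h i w hw

theorem sh_nil {m : ℕ} (a b : FPS m) : sh a b [] = a [] * b [] := by simp [sh]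

theorem Dl_sh {m : ℕ} (x : Letter m) (a b : FPS m) :
    Dl x (sh a b) = sh (Dl x a) b + sh a (Dl x b) := by
  funext w; simp [Dl, sh]; rfl

theorem sh_cons {m : ℕ} (x : Letter m) (a b : FPS m) (w : Word m) :
    sh a b (x :: w) = sh (Dl x a) b w + sh a (Dl x b) w := by
  simp [sh]; rfl

theorem Dl_add {m : ℕ} (x : Letter m) (a b : FPS m) : Dl x (a + b) = Dl x a + Dl x b := rfl
theorem Dl_zero {m : ℕ} (x : Letter m) : Dl x (0 : FPS m) = 0 := rfl
theorem Dl_smul {m : ℕ} (x : Letter m) (r : ℝ) (a : FPS m) : Dl x (r • a) = r • Dl x a := rfl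
theorem Dl_unit {m : ℕ} (x : Letter m) : Dl x (unit m) = 0 := by
  funext w; simp [Dl, unit]

theorem sh_comm {m : ℕ} (a b : FPS m) : sh a b = sh b a := by
  funext w
  induction w generalizing a b with
  | nil => simp [sh_nil, mul_comm]
  | cons x w ih => rw [sh_cons, sh_cons, ih, ih a, add_comm]

theorem sh_add {m : ℕ} (a b c : FPS m) : sh a (b + c) = sh a b + sh a c := by
  funext w
  induction w generalizing a b c with
  | nil => simp [sh_nil, mul_add]
  | cons x w ih => simp only [Pi.add_apply, sh_cons, Dl_add, ih]; ring

theorem add_sh {m : ℕ} (a b c : FPS m) : sh (a + b) c = sh a c + sh b c := by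
  rw [sh_comm, sh_add, sh_comm c, sh_comm c]

theorem sh_smul {m : ℕ} (r : ℝ) (a b : FPS m) : sh a (r • b) = r • sh a b := by
  funext w
  induction w generalizing a b with
  | nil => simp [sh_nil]; ring
  | cons x w ih => simp only [Pi.smul_apply, sh_cons, Dl_smul, ih, smul_add]

theorem sh_zero {m : ℕ} (a : FPS m) : sh a 0 = 0 := by
  have := sh_smul 0 a 0
  simpa using this

theorem zero_sh {m : ℕ} (a : FPS m) : sh 0 a = 0 := by rw [sh_comm, sh_zero]

theorem sh_sum {m : ℕ} {ι : Type*} (s : Finset ι) (a : FPS m) (f : ι → FPS m) :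
    sh a (∑ i ∈ s, f i) = ∑ i ∈ s, sh a (f i) := by
  classical
  induction s using Finset.induction_on with
  | empty => simp [sh_zero]
  | insert i s hi ih => rw [Finset.sum_insert hi, Finset.sum_insert hi, sh_add, ih]

theorem sum_sh {m : ℕ} {ι : Type*} (s : Finset ι) (a : FPS m) (f : ι → FPS m) :
    sh (∑ i ∈ s, f i) a = ∑ i ∈ s, sh (f i) a := by
  rw [sh_comm, sh_sum]; exact Finset.sum_congr rfl fun i _ => sh_comm _ _

theorem sh_assoc {m : ℕ} (a b c : FPS m) : sh (sh a b) c = sh a (sh b c) := by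
  funext w
  induction w generalizing a b c with
  | nil => simp [sh_nil, mul_assoc]
  | cons x w ih => simp only [sh_cons, Dl_sh, add_sh, sh_add, Pi.add_apply, ih]; ring

theorem unit_sh {m : ℕ} (a : FPS m) : sh (unit m) a = a := by
  funext w
  induction w generalizing a with
  | nil => simp [sh_nil, unit]
  | cons x w ih => rw [sh_cons, Dl_unit, zero_sh, ih]; simp [Dl]

theorem sh_unit {m : ℕ} (a : FPS m) : sh a (unit m) = a := by rw [sh_comm, unit_sh]

theorem Ag.sh' {m n : ℕ} {a b c d : FPS m} (h : Ag n a b) (h' : Ag n c d) :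
    Ag n (sh a c) (sh b d) := by
  induction n generalizing a b c d with
  | zero => exact Ag.zero'
  | succ n ih =>
    refine Ag.succ' ?_ fun x => ?_
    · rw [sh_nil, sh_nil, h [] (by simp), h' [] (by simp)]
    · rw [Dl_sh, Dl_sh]
      exact (ih (h.Dl' x) (h'.mono' (by omega))).add' (ih (h.mono' (by omega)) (h'.Dl' x))

theorem Ag.sh_proper {m n : ℕ} {a c d : FPS m} (ha : a [] = 0) (h' : Ag n c d) :
    Ag (n + 1) (sh a c) (sh a d) := by
  induction n generalizing c d with
  | zero => exact Ag.succ' (by simp [sh_nil, ha]) fun x => Ag.zero'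
  | succ n ih =>
    refine Ag.succ' (by simp [sh_nil, ha]) fun x => ?_
    rw [Dl_sh, Dl_sh]
    exact (Ag.rfl'.sh' h').add' (ih (h'.Dl' x))


theorem shInv_spec {m : ℕ} (c : FPS m) (hc : c [] ≠ 0) : sh c (shInv c) = unit m := by
  set c' : FPS m := fun u => if u = [] then 0 else c u with hc'
  have hstep : ∀ n, shInvAux c (n + 1) = (c [])⁻¹ • (unit m - sh c' (shInvAux c n)) := by
    intro n; funext w; simp [shInvAux, hc']
  have hcon : ∀ n (a b : FPS m), Ag n a b →
      Ag (n + 1) ((c [])⁻¹ • (unit m - sh c' a)) ((c [])⁻¹ • (unit m - sh c' b)) := by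
    intro n a b h w hw
    have := Ag.sh_proper (a := c') (by simp [hc']) h w hw
    simp [this]
  have hst : ∀ n, Ag n (shInvAux c n) (shInvAux c (n + 1)) := by
    intro n
    induction n with
    | zero => exact Ag.zero'
    | succ n ih => rw [hstep n, hstep (n + 1)]; exact hcon _ _ _ ih
  have hst2 : ∀ n k, Ag n (shInvAux c n) (shInvAux c (n + k)) := by
    intro n k
    induction k with
    | zero => exact Ag.rfl'
    | succ k ih => exact ih.trans' ((hst (n + k)).mono' (by omega))
  have hlim : ∀ n, Ag n (shInvAux c n) (shInv c) := by
    intro n w hw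
    obtain ⟨k, hk⟩ := Nat.exists_eq_add_of_le hw
    have := hst2 (w.length + 1) k w (by omega)
    rw [shInv, this, hk]
  have hfix : shInv c = (c [])⁻¹ • (unit m - sh c' (shInv c)) := by
    refine Ag.eq' fun n => ?_
    refine ((hlim (n + 1)).symm'.trans' ?_).mono' (Nat.le_succ n)
    rw [hstep]
    exact hcon _ _ _ (hlim n)
  have hdec : c = c [] • unit m + c' := by
    funext w
    by_cases hw : w = [] <;> simp [hc', unit, hw]
  have h1 : c [] • shInv c = unit m - sh c' (shInv c) := by
    conv_lhs => rw [hfix]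
    rw [smul_smul, mul_inv_cancel₀ hc, one_smul]
  have h2 : sh c (shInv c) = c [] • shInv c + sh c' (shInv c) := by
    conv_lhs => rw [hdec]
    rw [add_sh, sh_comm (c [] • unit m), sh_smul, sh_unit]
    rw [← hdec]
  rw [h2, h1]; simp

theorem shInv_unique {m : ℕ} (c a : FPS m) (hc : c [] ≠ 0) (h : sh c a = unit m) :
    shInv c = a := by
  rw [← sh_unit (shInv c), ← h, ← sh_assoc, sh_comm _ c, shInv_spec c hc, unit_sh]


/-- generic substitution on words -/
noncomputable def Wd {m l : ℕ} (A : Letter l → Letter m → FPS m) : Word l → FPS m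
  | [] => unit m
  | y :: η => fun w => match w with
    | [] => 0
    | x :: w => sh (A y x) (Wd A η) w

/-- generic substitution -/
noncomputable def Gs {m l : ℕ} (A : Letter l → Letter m → FPS m) (c : FPS l) : FPS m :=
  fun w => ∑ k ∈ Finset.range (w.length + 1),
    ∑ η : Fin k → Letter l, c (List.ofFn η) * Wd A (List.ofFn η) w

theorem Wd_short {m l : ℕ} (A : Letter l → Letter m → FPS m) (η : Word l) :
    Ag η.length (Wd A η) 0 := by
  induction η with
  | nil => exact Ag.zero'
  | cons y η ih =>
    refine Ag.succ' (by simp [Wd]) fun x => ?_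
    have : Dl x (Wd A (y :: η)) = sh (A y x) (Wd A η) := by funext w; simp [Dl, Wd]
    rw [this, Dl_zero, ← sh_zero (A y x)]
    exact Ag.rfl'.sh' ih

theorem Gs_trunc {m l : ℕ} (A : Letter l → Letter m → FPS m) (c : FPS l) (n : ℕ) :
    Ag n (Gs A c) (∑ k ∈ Finset.range n,
      ∑ η : Fin k → Letter l, c (List.ofFn η) • Wd A (List.ofFn η)) := by
  intro w hw
  simp only [Gs, Finset.sum_apply, Pi.smul_apply, smul_eq_mul]
  refine Finset.sum_subset (by intro k; simp; omega) ?_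
  intro k _ hk
  refine Finset.sum_eq_zero fun η _ => ?_
  rw [Wd_short A (List.ofFn η) w (by simp at hk ⊢; omega)]
  simp

theorem Gs_nil {m l : ℕ} (A : Letter l → Letter m → FPS m) (c : FPS l) :
    Gs A c [] = c [] := by
  simp [Gs, Wd, unit]

theorem Dl_Gs {m l : ℕ} (A : Letter l → Letter m → FPS m) (c : FPS l) (x : Letter m) :
    Dl x (Gs A c) = ∑ y, sh (A y x) (Gs A (Dl y c)) := by
  funext w
  have h : ∀ y, sh (A y x) (Gs A (Dl y c)) w = ∑ k ∈ Finset.range (w.length + 1),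
      ∑ η : Fin k → Letter l, c (y :: List.ofFn η) * sh (A y x) (Wd A (List.ofFn η)) w := by
    intro y
    rw [(Ag.rfl'.sh' (Gs_trunc A (Dl y c) (w.length + 1))) w (by omega)]
    simp only [sh_sum, sh_smul, Finset.sum_apply, Pi.smul_apply, smul_eq_mul, Dl]
  simp only [Finset.sum_apply, h]
  rw [Finset.sum_comm]
  simp only [Dl, Gs, List.length_cons]
  rw [Finset.sum_range_succ']
  simp only [List.ofFn_zero, Wd, unit]
  simp only [reduceCtorEq, if_false, mul_zero, Finset.sum_const_zero, add_zero]
  refine Finset.sum_congr rfl fun k _ => ?_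
  rw [← (Fin.consEquiv (fun _ : Fin (k + 1) => Letter l)).sum_comp, Fintype.sum_prod_type]
  simp [Fin.consEquiv, List.ofFn_succ, Wd]

theorem Gs_add {m l : ℕ} (A : Letter l → Letter m → FPS m) (a b : FPS l) :
    Gs A (a + b) = Gs A a + Gs A b := by
  funext w
  simp [Gs, add_mul, Finset.sum_add_distrib]

theorem Gs_zero {m l : ℕ} (A : Letter l → Letter m → FPS m) :
    Gs A 0 = 0 := by
  funext w
  simp [Gs]

theorem Gs_sum {m l : ℕ} (A : Letter l → Letter m → FPS m) {ι : Type*} (s : Finset ι)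
    (f : ι → FPS l) : Gs A (∑ i ∈ s, f i) = ∑ i ∈ s, Gs A (f i) := by
  classical
  induction s using Finset.induction_on with
  | empty => simp [Gs_zero]
  | insert i s hi ih => rw [Finset.sum_insert hi, Finset.sum_insert hi, Gs_add, ih]

theorem Gs_unit {m l : ℕ} (A : Letter l → Letter m → FPS m) :
    Gs A (unit l) = unit m := by
  refine Ag.eq' fun n => ?_
  cases n with
  | zero => exact Ag.zero'
  | succ n =>
    refine Ag.succ' (by simp [Gs_nil, unit]) fun x => ?_
    rw [Dl_Gs]
    simp [Dl_unit, Gs_zero, sh_zero, Ag.rfl']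

theorem Gs_sh {m l : ℕ} (A : Letter l → Letter m → FPS m) (a b : FPS l) :
    Gs A (sh a b) = sh (Gs A a) (Gs A b) := by
  refine Ag.eq' fun n => ?_
  induction n generalizing a b with
  | zero => exact Ag.zero'
  | succ n ih =>
    refine Ag.succ' (by simp [Gs_nil, sh_nil]) fun x => ?_
    rw [Dl_Gs, Dl_sh, Dl_Gs, Dl_Gs, sum_sh, sh_sum, ← Finset.sum_add_distrib]
    refine Ag.sum' fun y => ?_
    rw [Dl_sh, Gs_add, sh_add, sh_assoc, ← sh_assoc (Gs A a), sh_comm (Gs A a), sh_assoc]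
    exact (Ag.rfl'.sh' (ih _ _)).add' (Ag.rfl'.sh' (ih _ _))

theorem Gs_Gs {m l k : ℕ} (M : Letter l → Letter m → FPS m) (E : Letter k → Letter l → FPS l)
    (F : Letter k → Letter m → FPS m)
    (hF : ∀ z x, F z x = ∑ y, sh (M y x) (Gs M (E z y))) (c : FPS k) :
    Gs M (Gs E c) = Gs F c := by
  refine Ag.eq' fun n => ?_
  induction n generalizing c with
  | zero => exact Ag.zero'
  | succ n ih =>
    refine Ag.succ' (by simp [Gs_nil]) fun x => ?_
    rw [Dl_Gs, Dl_Gs]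
    simp only [Dl_Gs, Gs_sum, Gs_sh, sh_sum, hF, sum_sh, sh_assoc]
    rw [Finset.sum_comm]
    exact Ag.sum' fun z => Ag.sum' fun y => Ag.rfl'.sh' (Ag.rfl'.sh' (ih _))

theorem Gs_con {m l n : ℕ} {A B : Letter l → Letter m → FPS m}
    (h : ∀ y x, Ag n (A y x) (B y x)) (c : FPS l) :
    Ag (n + 1) (Gs A c) (Gs B c) := by
  induction n generalizing c with
  | zero => exact Ag.succ' (by simp [Gs_nil]) fun x => Ag.zero'
  | succ n ih =>
    refine Ag.succ' (by simp [Gs_nil]) fun x => ?_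
    rw [Dl_Gs, Dl_Gs]
    exact Ag.sum' fun y => (h y x).sh' (ih (fun y x => (h y x).mono' (by omega)) _)


/-- prepend the unit series -/
noncomputable def ext0 {m l : ℕ} (d : FPST m l) : Letter l → FPS m
  | none => unit m
  | some i => d i

/-- kernel of `mc` -/
noncomputable def Amc {m : ℕ} (d : FPST m m) : Letter m → Letter m → FPS m :=
  fun y x => if x = y then ext0 d y else 0

/-- kernel of `comp` -/
noncomputable def Aco {m l : ℕ} (d : FPST m l) : Letter l → Letter m → FPS m :=
  fun y x => if x = none then ext0 d y else 0

theorem wmc_eq {m : ℕ} (d : FPST m m) (η : Word m) : wmc d η = Wd (Amc d) η := by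
  induction η with
  | nil => simp [wmc, Wd]
  | cons y η ih =>
    funext w
    cases y <;> cases w <;> simp only [wmc, Wd, lc, ih, Amc, ext0] <;> split_ifs <;>
      simp [unit_sh, zero_sh]

theorem wcomp_eq {m l : ℕ} (d : FPST m l) (η : Word l) : wcomp d η = Wd (Aco d) η := by
  induction η with
  | nil => simp [wcomp, Wd]
  | cons y η ih =>
    funext w
    cases y <;> cases w <;> simp only [wcomp, Wd, lc, ih, Aco, ext0] <;> split_ifs <;>
      simp [zero_sh]

theorem mc_eq {m : ℕ} (c : FPS m) (d : FPST m m) : mc c d = Gs (Amc d) c := by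
  funext w; simp only [mc, Gs, wmc_eq]

theorem comp_eq {m l : ℕ} (c : FPS l) (d : FPST m l) : comp c d = Gs (Aco d) c := by
  funext w; simp only [comp, Gs, wcomp_eq]

theorem ext0_ag {m l n : ℕ} {d d' : FPST m l} (h : ∀ i, Ag n (d i) (d' i)) (y : Letter l) :
    Ag n (ext0 d y) (ext0 d' y) := by
  cases y with
  | none => exact Ag.rfl'
  | some i => exact h i

theorem mc_con {m n : ℕ} {d d' : FPST m m} (h : ∀ i, Ag n (d i) (d' i)) (c : FPS m) :
    Ag (n + 1) (mc c d) (mc c d') := by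
  rw [mc_eq, mc_eq]
  refine Gs_con (fun y x => ?_) c
  simp only [Amc]
  split_ifs
  · exact ext0_ag h y
  · exact Ag.rfl'

theorem comp_con {m l n : ℕ} {d d' : FPST m l} (h : ∀ i, Ag n (d i) (d' i)) (c : FPS l) :
    Ag (n + 1) (comp c d) (comp c d') := by
  rw [comp_eq, comp_eq]
  refine Gs_con (fun y x => ?_) c
  simp only [Aco]
  split_ifs
  · exact ext0_ag h y
  · exact Ag.rfl'

theorem mc_comp {m l : ℕ} (c : FPS l) (e : FPST m l) (u : FPST m m) :
    mc (comp c e) u = comp c (mcT e u) := by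
  rw [mc_eq, comp_eq, comp_eq]
  refine Gs_Gs _ _ _ (fun z x => ?_) c
  rw [Finset.sum_eq_single none]
  · simp only [Amc, Aco]
    split_ifs
    · cases z with
      | none => simp [ext0, Gs_unit, unit_sh]
      | some i => simp only [ext0, mcT, unit_sh, mc_eq]
    · rw [zero_sh]
  · intro y _ hy
    simp [Aco, hy, Gs_zero, sh_zero]
  · simp

theorem starInv_fix {m : ℕ} (d : FPST m m) : starInv d = mcT (shInvT d) (starInv d) := by
  have hst : ∀ n i, Ag n (starInvAux d n i) (starInvAux d (n + 1) i) := by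
    intro n
    induction n with
    | zero => exact fun i => Ag.zero'
    | succ n ih => exact fun i => mc_con ih _
  have hst2 : ∀ n k i, Ag n (starInvAux d n i) (starInvAux d (n + k) i) := by
    intro n k i
    induction k with
    | zero => exact Ag.rfl'
    | succ k ih => exact ih.trans' ((hst (n + k) i).mono' (by omega))
  have hlim : ∀ n i, Ag n (starInvAux d n i) (starInv d i) := by
    intro n i w hw
    obtain ⟨k, hk⟩ := Nat.exists_eq_add_of_le hw
    have := hst2 (w.length + 1) k i w (by omega)
    rw [starInv, this, hk]
  funext i
  refine Ag.eq' fun n => ?_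
  exact ((hlim (n + 1) i).symm'.trans' (mc_con (hlim n) _)).mono' (Nat.le_succ n)

theorem shInv_comp {m q : ℕ} (c : FPST m q) (d : FPST q m) (hd : PurelyImproper d) :
    shInvT (compT (shInvT d) c) = compT d c := by
  funext i
  have h : sh (comp (shInv (d i)) c) (comp (d i) c) = unit m := by
    rw [comp_eq, comp_eq, ← Gs_sh, sh_comm, shInv_spec _ (hd i), Gs_unit]
  refine shInv_unique _ _ ?_ h
  intro h0
  have := congrFun h []
  rw [sh_nil] at this
  change comp (shInv (d i)) c [] = 0 at h0
  rw [h0] at this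
  simp [unit] at this

end CFS

open CFS in
/-- For `c ∈ ℝ^q⟨⟨X⟩⟩` and purely improper `d ∈ ℝ^m⟨⟨X'⟩⟩`
(`|X| = m+1`, `|X'| = q+1`), the series `e₀ := c ⟲ (d^{⧢-1} ∘ c)^{⋆-1}` is the unique
solution in `ℝ^q⟨⟨X⟩⟩` of the fixed point equation `e = c ⟲ (d ∘ e)`. -/
theorem feedback_fixed_point (m q : ℕ) (c : FPST m q) (d : FPST q m)
    (hd : PurelyImproper d) :
    ∀ e₀ : FPST m q, e₀ = mcT c (starInv (compT (shInvT d) c)) →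
      e₀ = mcT c (compT d e₀) ∧
      ∀ e : FPST m q, e = mcT c (compT d e) → e = e₀ := by
  intro e₀ he
  set u := starInv (compT (shInvT d) c) with hu
  have h1 : u = compT d e₀ := by
    have := starInv_fix (compT (shInvT d) c)
    rw [shInv_comp c d hd, ← hu] at this
    rw [this, he]
    funext i
    exact mc_comp (d i) c u
  have h2 : e₀ = mcT c (compT d e₀) := by rw [← h1]; exact he
  refine ⟨h2, fun e hE => ?_⟩
  have key : ∀ n i, Ag n (e i) (e₀ i) := by
    intro n
    induction n with
    | zero => exact fun i => Ag.zero'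
    | succ n ih =>
      intro i
      rw [hE, h2]
      exact (mc_con (fun j => comp_con ih (d j)) (c i)).mono' (by omega)
  funext i
  exact Ag.eq' fun n => key n i
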